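/- Let α(x) = α₁(x₁)e₁ + α₂(x₂)e₂ + α₃(x₃)e₃, where α₁, α₂, α₃ : ℝ → ℂ are continuous, and let Λ₁, Λ₂, Λ₃ : ℝ → ℂ be antiderivatives, Λ_k' = α_k. Define the scalar functions f₀(x) = exp(−Λ₁(x₁) − Λ₂(x₂) − Λ₃(x₃)), f₁(x) = exp(−Λ₁(x₁) + Λ₂(x₂) + Λ₃(x₃)), f₂(x) = exp(Λ₁(x₁) − Λ₂(x₂) + Λ₃(x₃)), f₃(x) = exp(Λ₁(x₁) + Λ₂(x₂) − Λ₃(x₃)). Then for any complex constants c₀, c₁, c₂, c₃, the function f = c₀f₀ + c₁f₁e₁ + c₂f₂e₂ + c₃f₃e₃ satisfies Df + fα = 0 on ℝ³. -/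

import Mathlib

noncomputable section

abbrev HC := Quaternion ℂ

def e1 : HC := ⟨0, 1, 0, 0⟩
def e2 : HC := ⟨0, 0, 1, 0⟩
def e3 : HC := ⟨0, 0, 0, 1⟩

def pd (k : Fin 3) (g : (Fin 3 → ℝ) → ℂ) (x : Fin 3 → ℝ) : ℂ :=
  fderiv ℝ g x (Pi.single k 1)

def lap (g : (Fin 3 → ℝ) → ℂ) (x : Fin 3 → ℝ) : ℂ :=
  pd 0 (pd 0 g) x + pd 1 (pd 1 g) x + pd 2 (pd 2 g) x

def pdq (k : Fin 3) (f : (Fin 3 → ℝ) → HC) (x : Fin 3 → ℝ) : HC :=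
  ⟨pd k (fun y => (f y).re) x, pd k (fun y => (f y).imI) x,
   pd k (fun y => (f y).imJ) x, pd k (fun y => (f y).imK) x⟩

def Dq (f : (Fin 3 → ℝ) → HC) (x : Fin 3 → ℝ) : HC :=
  e1 * pdq 0 f x + e2 * pdq 1 f x + e3 * pdq 2 f x

def lapq (f : (Fin 3 → ℝ) → HC) (x : Fin 3 → ℝ) : HC :=
  ⟨lap (fun y => (f y).re) x, lap (fun y => (f y).imI) x,
   lap (fun y => (f y).imJ) x, lap (fun y => (f y).imK) x⟩

def QDiffOn (f : (Fin 3 → ℝ) → HC) (Ω : Set (Fin 3 → ℝ)) : Prop :=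
  DifferentiableOn ℝ (fun y => (f y).re) Ω ∧ DifferentiableOn ℝ (fun y => (f y).imI) Ω ∧
  DifferentiableOn ℝ (fun y => (f y).imJ) Ω ∧ DifferentiableOn ℝ (fun y => (f y).imK) Ω

def QC2On (f : (Fin 3 → ℝ) → HC) (Ω : Set (Fin 3 → ℝ)) : Prop :=
  ContDiffOn ℝ 2 (fun y => (f y).re) Ω ∧ ContDiffOn ℝ 2 (fun y => (f y).imI) Ω ∧
  ContDiffOn ℝ 2 (fun y => (f y).imJ) Ω ∧ ContDiffOn ℝ 2 (fun y => (f y).imK) Ω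


/-- Build a biquaternion from its four complex components. -/
def quat (a b c d : ℂ) : HC := ⟨a, b, c, d⟩

/-- The diagonal purely vectorial function `α(x) = α₁(x₁)e₁ + α₂(x₂)e₂ + α₃(x₃)e₃`. -/
def dal (a1 a2 a3 : ℝ → ℂ) (x : Fin 3 → ℝ) : HC :=
  quat 0 (a1 (x 0)) (a2 (x 1)) (a3 (x 2))

/-- `s = α₁² + α₂² + α₃²` (so that `α² = −s`). -/
def sq3 (a1 a2 a3 : ℝ → ℂ) (x : Fin 3 → ℝ) : ℂ :=
  a1 (x 0) ^ 2 + a2 (x 1) ^ 2 + a3 (x 2) ^ 2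

/-- The scalar potentials `v_k = −Dα^{(k)} − α²`, written explicitly. -/
def vpot (a1 a2 a3 : ℝ → ℂ) : Fin 4 → (Fin 3 → ℝ) → ℂ :=
  ![fun x => deriv a1 (x 0) + deriv a2 (x 1) + deriv a3 (x 2) + sq3 a1 a2 a3 x,
    fun x => deriv a1 (x 0) - deriv a2 (x 1) - deriv a3 (x 2) + sq3 a1 a2 a3 x,
    fun x => -deriv a1 (x 0) + deriv a2 (x 1) - deriv a3 (x 2) + sq3 a1 a2 a3 x,
    fun x => -deriv a1 (x 0) - deriv a2 (x 1) + deriv a3 (x 2) + sq3 a1 a2 a3 x]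

/-- The scalar potentials `w_k = Dα^{(k)} − α²`, written explicitly. -/
def wpot (a1 a2 a3 : ℝ → ℂ) : Fin 4 → (Fin 3 → ℝ) → ℂ :=
  ![fun x => -(deriv a1 (x 0) + deriv a2 (x 1) + deriv a3 (x 2)) + sq3 a1 a2 a3 x,
    fun x => -deriv a1 (x 0) + deriv a2 (x 1) + deriv a3 (x 2) + sq3 a1 a2 a3 x,
    fun x => deriv a1 (x 0) - deriv a2 (x 1) + deriv a3 (x 2) + sq3 a1 a2 a3 x,
    fun x => deriv a1 (x 0) + deriv a2 (x 1) - deriv a3 (x 2) + sq3 a1 a2 a3 x]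

/-- The `k`-th complex component of a biquaternion. -/
def qc (k : Fin 4) (q : HC) : ℂ := ![q.re, q.imI, q.imJ, q.imK] k

/-!
For a scalar function `g` and a constant biquaternion `q` one has `D (g q) = (∇g) q`. Since
`e_k² = -1`, the equation `D (g e_k) + g e_k α = 0` therefore follows from `∇g = g e_k α e_k`, and
for `k = 0` from `∇g = -g α`. Multiplying a vector by `e_k` on both sides only flips the sign of
its `k`-th coordinate, so for `α` of diagonal form these are equations for the logarithmic gradient
of `g`, and the exponentials of the sums `± Λ₁ ± Λ₂ ± Λ₃` with the matching signs solve them.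
-/

open scoped Quaternion

section Components

variable (r a b c d : ℂ)

@[simp] theorem re_quat : (quat a b c d).re = a := rfl

@[simp] theorem imI_quat : (quat a b c d).imI = b := rfl

@[simp] theorem imJ_quat : (quat a b c d).imJ = c := rfl

@[simp] theorem imK_quat : (quat a b c d).imK = d := rfl

theorem e1_eq_quat : e1 = quat 0 1 0 0 := rfl

theorem e2_eq_quat : e2 = quat 0 0 1 0 := rfl

theorem e3_eq_quat : e3 = quat 0 0 0 1 := rfl

theorem neg_quat : -quat a b c d = quat (-a) (-b) (-c) (-d) := rfl

theorem coe_mul_quat : (r : HC) * quat a b c d = quat (r * a) (r * b) (r * c) (r * d) := by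
  ext <;> simp

theorem quat_eq_add_mul_units : quat a b c d = (a : HC) + b * e1 + c * e2 + d * e3 := by
  ext <;> simp [e1_eq_quat, e2_eq_quat, e3_eq_quat]

theorem e1_mul_self : e1 * e1 = -1 := by
  ext <;> simp [e1_eq_quat]

theorem e2_mul_self : e2 * e2 = -1 := by
  ext <;> simp [e2_eq_quat]

theorem e3_mul_self : e3 * e3 = -1 := by
  ext <;> simp [e3_eq_quat]

theorem e1_mul_quat_mul_e1 : e1 * quat a b c d * e1 = quat (-a) (-b) c d := by
  ext <;> simp [e1_eq_quat]

theorem e2_mul_quat_mul_e2 : e2 * quat a b c d * e2 = quat (-a) b (-c) d := by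
  ext <;> simp [e2_eq_quat]

theorem e3_mul_quat_mul_e3 : e3 * quat a b c d * e3 = quat (-a) b c (-d) := by
  ext <;> simp [e3_eq_quat]

end Components

/-- The gradient `∇g = e₁ ∂g/∂x₁ + e₂ ∂g/∂x₂ + e₃ ∂g/∂x₃` of a complex-valued function, encoded as
a biquaternion with scalar part `0` so that it can be multiplied by the units `e_k`. -/
def grad (g : (Fin 3 → ℝ) → ℂ) (x : Fin 3 → ℝ) : HC :=
  quat 0 (pd 0 g x) (pd 1 g x) (pd 2 g x)

section Gradient

theorem hasFDerivAt_comp_apply {𝕜 ι E : Type*} [NontriviallyNormedField 𝕜] [Finite ι]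
    [NormedAddCommGroup E] [NormedSpace 𝕜 E] {M : 𝕜 → E} {b : E} {x : ι → 𝕜} {j : ι}
    (hM : HasDerivAt M b (x j)) :
    HasFDerivAt (fun y : ι → 𝕜 => M (y j))
      ((ContinuousLinearMap.proj (R := 𝕜) (φ := fun _ : ι => 𝕜) j).smulRight b) x := by
  have := Fintype.ofFinite ι
  exact HasFDerivAt.comp x (f := fun y : ι → 𝕜 => y j) hM.hasFDerivAt (hasFDerivAt_apply j x)

variable {x : Fin 3 → ℝ}

theorem grad_const_mul_cexp {u : (Fin 3 → ℝ) → ℂ} (hu : DifferentiableAt ℝ u x) (c : ℂ) :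
    grad (fun y => c * Complex.exp (u y)) x = ↑(c * Complex.exp (u x)) * grad u x := by
  have hpd (k : Fin 3) :
      pd k (fun y => c * Complex.exp (u y)) x = c * Complex.exp (u x) * pd k u x := by
    simp [pd, (hu.hasFDerivAt.cexp.const_mul c).fderiv, mul_assoc]
  simp only [grad, coe_mul_quat, hpd, mul_zero]

variable {M₁ M₂ M₃ : ℝ → ℂ} {b₁ b₂ b₃ : ℂ}

theorem grad_const_mul_cexp_add_add (h₁ : HasDerivAt M₁ b₁ (x 0)) (h₂ : HasDerivAt M₂ b₂ (x 1))
    (h₃ : HasDerivAt M₃ b₃ (x 2)) (c : ℂ) :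
    grad (fun y => c * Complex.exp (M₁ (y 0) + M₂ (y 1) + M₃ (y 2))) x =
      ↑(c * Complex.exp (M₁ (x 0) + M₂ (x 1) + M₃ (x 2))) * quat 0 b₁ b₂ b₃ := by
  have hsum := ((hasFDerivAt_comp_apply h₁).fun_add (hasFDerivAt_comp_apply h₂)).fun_add
    (hasFDerivAt_comp_apply h₃)
  have hgrad : grad (fun y => M₁ (y 0) + M₂ (y 1) + M₃ (y 2)) x = quat 0 b₁ b₂ b₃ := by
    simp [grad, pd, hsum.fderiv]
  rw [grad_const_mul_cexp hsum.differentiableAt, hgrad]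

end Gradient

section MoisilTheodoresco

theorem mul_neg_add_mul_conj_add_mul_eq_zero {R : Type*} [Ring R] {u₁ u₂ u₃ : R}
    (h₁ : u₁ * u₁ = -1) (h₂ : u₂ * u₂ = -1) (h₃ : u₃ * u₃ = -1) (r₀ r₁ r₂ r₃ a : R) :
    r₀ * -a + r₁ * (u₁ * a * u₁) * u₁ + r₂ * (u₂ * a * u₂) * u₂ + r₃ * (u₃ * a * u₃) * u₃ +
      (r₀ + r₁ * u₁ + r₂ * u₂ + r₃ * u₃) * a = 0 := by
  simp only [mul_assoc, h₁, h₂, h₃, add_mul, mul_neg, mul_one]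
  abel

variable {g₀ g₁ g₂ g₃ : (Fin 3 → ℝ) → ℂ} {x : Fin 3 → ℝ}

theorem pdq_quat (k : Fin 3) :
    pdq k (fun y => quat (g₀ y) (g₁ y) (g₂ y) (g₃ y)) x =
      quat (pd k g₀ x) (pd k g₁ x) (pd k g₂ x) (pd k g₃ x) := rfl

theorem Dq_quat :
    Dq (fun y => quat (g₀ y) (g₁ y) (g₂ y) (g₃ y)) x =
      grad g₀ x + grad g₁ x * e1 + grad g₂ x * e2 + grad g₃ x * e3 := by
  ext <;> simp [Dq, pdq_quat, grad, e1_eq_quat, e2_eq_quat, e3_eq_quat] <;> ring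

theorem Dq_quat_add_mul_eq_zero {α : HC} (h₀ : grad g₀ x = g₀ x * -α)
    (h₁ : grad g₁ x = g₁ x * (e1 * α * e1)) (h₂ : grad g₂ x = g₂ x * (e2 * α * e2))
    (h₃ : grad g₃ x = g₃ x * (e3 * α * e3)) :
    Dq (fun y => quat (g₀ y) (g₁ y) (g₂ y) (g₃ y)) x +
      quat (g₀ x) (g₁ x) (g₂ x) (g₃ x) * α = 0 := by
  rw [Dq_quat, h₀, h₁, h₂, h₃, quat_eq_add_mul_units]
  exact mul_neg_add_mul_conj_add_mul_eq_zero e1_mul_self e2_mul_self e3_mul_self _ _ _ _ α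

end MoisilTheodoresco

theorem exponential_solutions_general {a1 a2 a3 L1 L2 L3 : ℝ → ℂ} {x : Fin 3 → ℝ}
    (hL1 : HasDerivAt L1 (a1 (x 0)) (x 0)) (hL2 : HasDerivAt L2 (a2 (x 1)) (x 1))
    (hL3 : HasDerivAt L3 (a3 (x 2)) (x 2)) (c0 c1 c2 c3 : ℂ) :
    let f : (Fin 3 → ℝ) → HC := fun y =>
      quat (c0 * Complex.exp (-L1 (y 0) - L2 (y 1) - L3 (y 2)))
           (c1 * Complex.exp (-L1 (y 0) + L2 (y 1) + L3 (y 2)))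
           (c2 * Complex.exp (L1 (y 0) - L2 (y 1) + L3 (y 2)))
           (c3 * Complex.exp (L1 (y 0) + L2 (y 1) - L3 (y 2)))
    Dq f x + f x * dal a1 a2 a3 x = 0 := by
  simp only [sub_eq_add_neg, dal]
  apply Dq_quat_add_mul_eq_zero
  · rw [neg_quat, neg_zero]
    exact grad_const_mul_cexp_add_add hL1.neg hL2.neg hL3.neg c0
  · rw [e1_mul_quat_mul_e1, neg_zero]
    exact grad_const_mul_cexp_add_add hL1.neg hL2 hL3 c1
  · rw [e2_mul_quat_mul_e2, neg_zero]
    exact grad_const_mul_cexp_add_add hL1 hL2.neg hL3 c2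
  · rw [e3_mul_quat_mul_e3, neg_zero]
    exact grad_const_mul_cexp_add_add hL1 hL2 hL3.neg c3

/-- the explicit family of exact one-component solutions: with
`Λ_k' = α_k`, the function `f = c₀f₀ + c₁f₁e₁ + c₂f₂e₂ + c₃f₃e₃` built from the
exponentials `f_k = exp(±Λ₁ ± Λ₂ ± Λ₃)` solves `Df + fα = 0` on ℝ³. -/
theorem exponential_solutions
    (a1 a2 a3 : ℝ → ℂ)
    (ha1 : Continuous a1) (ha2 : Continuous a2) (ha3 : Continuous a3)
    (L1 L2 L3 : ℝ → ℂ)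
    (hL1 : ∀ t : ℝ, HasDerivAt L1 (a1 t) t)
    (hL2 : ∀ t : ℝ, HasDerivAt L2 (a2 t) t)
    (hL3 : ∀ t : ℝ, HasDerivAt L3 (a3 t) t)
    (c0 c1 c2 c3 : ℂ) :
    (let f : (Fin 3 → ℝ) → HC := fun y =>
      quat (c0 * Complex.exp (-L1 (y 0) - L2 (y 1) - L3 (y 2)))
           (c1 * Complex.exp (-L1 (y 0) + L2 (y 1) + L3 (y 2)))
           (c2 * Complex.exp (L1 (y 0) - L2 (y 1) + L3 (y 2)))
           (c3 * Complex.exp (L1 (y 0) + L2 (y 1) - L3 (y 2)))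
     ∀ x : Fin 3 → ℝ, Dq f x + f x * dal a1 a2 a3 x = 0) :=
  fun _ => exponential_solutions_general (hL1 _) (hL2 _) (hL3 _) c0 c1 c2 c3
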